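/- Let G be a second countable locally compact group, N a closed normal subgroup, π : G → G/N the quotient homomorphism, λ a left Haar measure on G/N and ν a left Haar measure on N. Then there is a normalization of the left Haar measure μ on G with the following property: for every Borel measurable map χ : G/N → G with π∘χ = id_{G/N} and for all Borel sets Q ⊆ G/N and R ⊆ N, one has μ(χ(Q)·R) = λ(Q)·ν(R), where χ(Q)·R = {χ(q)r : q ∈ Q, r ∈ R}. Moreover, the same normalization of μ works simultaneously for all such sections χ. -/

import Mathlib

open MeasureTheory Set
open scoped Pointwise

noncomputable section

/-- The measure of the slice of `A` along the coset `gN` is independent of the representative. -/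
lemma slice_congr
    {G : Type*} [Group G] [TopologicalSpace G] [IsTopologicalGroup G]
    (N : Subgroup G) [MeasurableSpace ↥N] [BorelSpace ↥N]
    (nu : Measure ↥N) [nu.IsHaarMeasure] (A : Set G) (g h : G)
    (hgh : (QuotientGroup.mk g : G ⧸ N) = QuotientGroup.mk h) :
    nu {n : ↥N | g * (n : G) ∈ A} = nu {n : ↥N | h * (n : G) ∈ A} := by
  have hm : g⁻¹ * h ∈ N := QuotientGroup.eq.1 hgh
  have := measure_preimage_mul nu (⟨g⁻¹ * h, hm⟩ : ↥N) {n : ↥N | g * (n : G) ∈ A}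
  rw [← this]
  congr 1
  ext n
  simp [mul_assoc]

theorem exists_haar_measure_product_formula
    {G : Type*} [Group G] [TopologicalSpace G] [IsTopologicalGroup G]
    [LocallyCompactSpace G] [SecondCountableTopology G]
    [MeasurableSpace G] [BorelSpace G]
    (N : Subgroup G) [N.Normal] (hNclosed : IsClosed (N : Set G))
    [MeasurableSpace (G ⧸ N)] [BorelSpace (G ⧸ N)]
    [MeasurableSpace ↥N] [BorelSpace ↥N]
    (lam : Measure (G ⧸ N)) [lam.IsHaarMeasure]
    (nu : Measure ↥N) [nu.IsHaarMeasure] :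
    ∃ μ : Measure G, μ.IsHaarMeasure ∧
      ∀ χ : G ⧸ N → G, Measurable χ →
        (∀ x : G ⧸ N, (QuotientGroup.mk (χ x) : G ⧸ N) = x) →
        ∀ (Q : Set (G ⧸ N)) (R : Set ↥N), MeasurableSet Q → MeasurableSet R →
          μ ((χ '' Q) * ((fun n : ↥N => (n : G)) '' R)) = lam Q * nu R := by
  have hemb : Topology.IsClosedEmbedding (fun n : ↥N => (n : G)) :=
    hNclosed.isClosedEmbedding_subtypeVal
  have hme : MeasurableEmbedding (fun n : ↥N => (n : G)) := hemb.measurableEmbedding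
  have : LocallyCompactSpace ↥N := hemb.locallyCompactSpace
  have : SecondCountableTopology ↥N := hemb.isEmbedding.secondCountableTopology
  have hpi : Measurable (fun g : G => (QuotientGroup.mk g : G ⧸ N)) :=
    (QuotientGroup.continuous_mk).measurable
  by_cases hex : ∃ χ : G ⧸ N → G, Measurable χ ∧
      (∀ x : G ⧸ N, (QuotientGroup.mk (χ x) : G ⧸ N) = x)
  swap
  · exact ⟨Measure.haar, inferInstance, fun χ h1 h2 => (hex ⟨χ, h1, h2⟩).elim⟩
  obtain ⟨χ₀, hχ₀, hs₀⟩ := hex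
  have hΦ : Measurable (fun p : (G ⧸ N) × ↥N => χ₀ p.1 * (p.2 : G)) :=
    (hχ₀.comp measurable_fst).mul (hme.measurable.comp measurable_snd)
  set μ : Measure G := (lam.prod nu).map (fun p : (G ⧸ N) × ↥N => χ₀ p.1 * (p.2 : G)) with hμ
  have key : ∀ A : Set G, MeasurableSet A →
      μ A = ∫⁻ w, nu {n : ↥N | χ₀ w * (n : G) ∈ A} ∂lam := by
    intro A hA
    rw [hμ, Measure.map_apply hΦ hA, Measure.prod_apply (hΦ hA)]
    rfl
  have hmeasF : ∀ A : Set G, MeasurableSet A →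
      Measurable (fun w => nu {n : ↥N | χ₀ w * (n : G) ∈ A}) := by
    intro A hA
    exact measurable_measure_prodMk_left (hΦ hA)
  have hinv : μ.IsMulLeftInvariant := by
    constructor
    intro g
    ext A hA
    rw [Measure.map_apply (measurable_const_mul g) hA, key _ (measurable_const_mul g hA), key _ hA]
    rw [← lintegral_mul_left_eq_self (μ := lam)
      (fun w => nu {n : ↥N | χ₀ w * (n : G) ∈ A}) (QuotientGroup.mk g : G ⧸ N)]
    refine lintegral_congr fun w => ?_
    rw [slice_congr N nu A (χ₀ (QuotientGroup.mk g * w)) (g * χ₀ w)]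
    · simp [mul_assoc]
    · rw [hs₀, QuotientGroup.mk_mul, hs₀]
  have hfin : IsFiniteMeasureOnCompacts μ := by
    constructor
    intro K₀ hK₀
    refine lt_of_le_of_lt (measure_mono subset_closure) ?_
    have hK : IsCompact (closure K₀) := hK₀.closure
    have hKc : IsClosed (closure K₀) := isClosed_closure
    generalize closure K₀ = K at hK hKc
    rw [key K hKc.measurableSet]
    set C : Set ↥N := (fun n : ↥N => (n : G)) ⁻¹' (K⁻¹ * K) with hC
    have hCc : nu C < ⊤ := (hemb.isCompact_preimage (hK.inv.mul hK)).measure_lt_top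
    set D : Set (G ⧸ N) := (fun g : G => (QuotientGroup.mk g : G ⧸ N)) '' K with hD
    have hDK : IsCompact D := hK.image QuotientGroup.continuous_mk
    calc ∫⁻ w, nu {n : ↥N | χ₀ w * (n : G) ∈ K} ∂lam
        ≤ ∫⁻ w, D.indicator (fun _ => nu C) w ∂lam := by
          refine lintegral_mono fun w => ?_
          by_cases hw : w ∈ D
          · obtain ⟨k, hk, rfl⟩ := hw
            rw [indicator_of_mem (mem_image_of_mem _ hk)]
            rw [slice_congr N nu K (χ₀ (QuotientGroup.mk k)) k (hs₀ _)]
            refine measure_mono fun n hn => ?_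
            exact ⟨k⁻¹, inv_mem_inv.2 hk, k * n, hn, by simp⟩
          · rw [indicator_of_notMem hw]
            have : {n : ↥N | χ₀ w * (n : G) ∈ K} = ∅ := by
              refine eq_empty_of_forall_notMem fun n hn => hw ⟨_, hn, ?_⟩
              dsimp only
              rw [QuotientGroup.mk_mul_of_mem _ n.2, hs₀]
            simp [this]
      _ ≤ nu C * lam D := lintegral_indicator_const_le _ _
      _ < ⊤ := ENNReal.mul_lt_top hCc hDK.measure_lt_top
  have hopen : μ.IsOpenPosMeasure := by
    constructor
    intro U hU hne h0
    rw [key U hU.measurableSet, lintegral_eq_zero_iff (hmeasF U hU.measurableSet)] at h0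
    have hV : IsOpen ((fun g : G => (QuotientGroup.mk g : G ⧸ N)) '' U) :=
      QuotientGroup.isOpenMap_coe U hU
    refine (hV.measure_pos lam (hne.image _)).ne' (measure_mono_null ?_ h0)
    rintro _ ⟨u, hu, rfl⟩ h
    replace h : nu {n : ↥N | χ₀ (QuotientGroup.mk u) * (n : G) ∈ U} = 0 := h
    rw [slice_congr N nu U (χ₀ (QuotientGroup.mk u)) u (hs₀ _)] at h
    have ho : IsOpen {n : ↥N | u * (n : G) ∈ U} :=
      hU.preimage (continuous_const.mul continuous_subtype_val)
    exact (ho.measure_pos nu ⟨1, by simpa using hu⟩).ne' h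
  refine ⟨μ, { toIsFiniteMeasureOnCompacts := hfin, toIsMulLeftInvariant := hinv,
               toIsOpenPosMeasure := hopen }, ?_⟩
  intro χ hχ hs Q R hQ hR
  set S : Set G := (χ '' Q) * ((fun n : ↥N => (n : G)) '' R) with hS
  have hmem : ∀ (w : G ⧸ N) (n : ↥N), χ w * (n : G) ∈ S ↔ w ∈ Q ∧ n ∈ R := by
    intro w n
    constructor
    · rintro ⟨_, ⟨q, hq, rfl⟩, _, ⟨r, hr, rfl⟩, h⟩
      replace h : χ q * (r : G) = χ w * (n : G) := h
      have h1 : q = w := by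
        have := congrArg (fun g : G => (QuotientGroup.mk g : G ⧸ N)) h
        rwa [QuotientGroup.mk_mul_of_mem _ n.2, QuotientGroup.mk_mul_of_mem _ r.2, hs, hs] at this
      subst h1
      have h2 : r = n := Subtype.ext (mul_left_cancel h)
      subst h2
      exact ⟨hq, hr⟩
    · rintro ⟨hw, hn⟩
      exact mul_mem_mul (mem_image_of_mem _ hw) ⟨n, hn, rfl⟩
  have hSm : MeasurableSet S := by
    have hσ : Measurable (fun g : G => (χ (QuotientGroup.mk g))⁻¹ * g) :=
      (hχ.comp hpi).inv.mul measurable_id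
    have : S = (fun g : G => (QuotientGroup.mk g : G ⧸ N)) ⁻¹' Q ∩
        (fun g : G => (χ (QuotientGroup.mk g))⁻¹ * g) ⁻¹' ((fun n : ↥N => (n : G)) '' R) := by
      ext g
      have hg : (χ (QuotientGroup.mk g))⁻¹ * g ∈ N := QuotientGroup.eq.1 (hs _)
      have := hmem (QuotientGroup.mk g) ⟨_, hg⟩
      simp only [mul_inv_cancel_left] at this
      rw [this]
      constructor
      · rintro ⟨h1, h2⟩
        exact ⟨h1, _, h2, rfl⟩
      · rintro ⟨h1, r, hr, h2⟩
        refine ⟨h1, ?_⟩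
        have : r = ⟨_, hg⟩ := Subtype.ext h2
        rwa [← this]
    rw [this]
    exact (hpi hQ).inter (hσ (hme.measurableSet_image.2 hR))
  rw [key S hSm]
  calc ∫⁻ w, nu {n : ↥N | χ₀ w * (n : G) ∈ S} ∂lam
      = ∫⁻ w, Q.indicator (fun _ => nu R) w ∂lam := by
        refine lintegral_congr fun w => ?_
        rw [slice_congr N nu S (χ₀ w) (χ w) (by rw [hs₀, hs])]
        simp only [hmem]
        by_cases hw : w ∈ Q <;> simp [hw]
    _ = lam Q * nu R := by rw [lintegral_indicator_const hQ, mul_comm]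

end
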